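/- arXiv:0712.0890 — 2 statements merged into one kernel-verified Lean document; each statement's English description precedes it below -/
import Mathlib

section
/- Let X and Y be compact Hausdorff topological spaces and let f : X → Y be a continuous open surjection. If X is totally disconnected (every connected component of X is a singleton), then Y is totally disconnected. -/
/-- A continuous open surjection between compact Hausdorff spaces maps a totally
    disconnected domain onto a totally disconnected codomain. -/
theorem totallyDisconnected_of_open_surjection
    {X Y : Type*} [TopologicalSpace X] [TopologicalSpace Y]
    [CompactSpace X] [T2Space X] [CompactSpace Y] [T2Space Y]
    (f : X → Y) (hf_cont : Continuous f) (hf_open : IsOpenMap f)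
    (hf_surj : Function.Surjective f)
    (hX : TotallyDisconnectedSpace X) :
    TotallyDisconnectedSpace Y := by
  suffices h : TotallySeparatedSpace Y from inferInstance
  refine totallySeparatedSpace_iff_exists_isClopen.mpr fun y z hyz => ?_
  obtain ⟨x, rfl⟩ := hf_surj y
  obtain ⟨V, hV, hxV, hVU⟩ := compact_exists_isClopen_in_isOpen
    (isOpen_compl_singleton.preimage hf_cont : IsOpen (f ⁻¹' {z}ᶜ)) (x := x) hyz
  refine ⟨f '' V, ⟨hf_cont.isClosedMap _ hV.1, hf_open _ hV.2⟩, ⟨x, hxV, rfl⟩, ?_⟩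
  rintro ⟨w, hw, hwz⟩
  exact hVU hw hwz
end

section
/- Let R be a Boolean ring (a ring in which a² = a for every a), let S be a ring, and let f : R → S be a surjective ring homomorphism. Then for all ideals I, J of R, the image ideal satisfies Ideal.map f (I ⊓ J) = Ideal.map f I ⊓ Ideal.map f J. -/
/-- A surjective ring homomorphism from a Boolean ring preserves intersections of
ideals: `f(I ∩ J) = f(I) ∩ f(J)`. -/
theorem ideal_map_inf_of_boolean_ring
    {R S : Type*} [Ring R] [Ring S] (h : ∀ a : R, a * a = a)
    (f : R →+* S) (hf : Function.Surjective f) :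
    ∀ I J : Ideal R, Ideal.map f (I ⊓ J) = Ideal.map f I ⊓ Ideal.map f J := by
  intro I J
  have hchar : ∀ a : R, a + a = 0 := by
    intro a
    have h1 := h (a + a)
    rw [mul_add, add_mul] at h1
    simp only [h] at h1
    simpa using h1
  have hcomm : ∀ a b : R, a * b = b * a := by
    intro a b
    have h1 := h (a + b)
    rw [mul_add, add_mul, add_mul] at h1
    simp only [h] at h1
    have h2 : a * b + b * a = 0 := by
      have h3 : a + b + (a * b + b * a) = a + b := by
        refine Eq.trans ?_ h1
        abel
      simpa using h3
    rw [eq_neg_of_add_eq_zero_left h2]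
    exact (eq_neg_of_add_eq_zero_left (hchar (b * a))).symm
  apply le_antisymm
  · exact le_inf (Ideal.map_mono inf_le_left) (Ideal.map_mono inf_le_right)
  · rintro y ⟨hI, hJ⟩
    obtain ⟨a, ha, rfl⟩ := (Ideal.mem_map_iff_of_surjective f hf).1 hI
    obtain ⟨b, hb, hab⟩ := (Ideal.mem_map_iff_of_surjective f hf).1 hJ
    refine (Ideal.mem_map_iff_of_surjective f hf).2 ⟨a * b, ⟨?_, J.mul_mem_left a hb⟩, ?_⟩
    · rw [hcomm]
      exact I.mul_mem_left b ha
    · rw [map_mul, hab, ← map_mul, h]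
end
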